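/- Let μ, λ ∈ ℝ with λ² > μ², and set k = √(λ² − μ²) > 0. Suppose φ : ℝ → ℂ² is differentiable, is not identically zero on [−1,1], satisfies −i·σ₂·φ'(t) + μ·σ₃·φ(t) = λ·φ(t) for all t ∈ [−1,1], and satisfies the infinite mass boundary conditions σ₁φ(−1) = φ(−1) and σ₁φ(1) = −φ(1). Then sin(2k) ≠ 0, μ·sin(2k) + k·cos(2k) = 0, and λ²·sin(2k)² = k². -/

import Mathlib

open Matrix Complex

/-- The Pauli matrix σ₁. -/
noncomputable def σ1 : Matrix (Fin 2) (Fin 2) ℂ := !![0, 1; 1, 0]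
/-- The Pauli matrix σ₂. -/
noncomputable def σ2 : Matrix (Fin 2) (Fin 2) ℂ := !![0, -Complex.I; Complex.I, 0]
/-- The Pauli matrix σ₃. -/
noncomputable def σ3 : Matrix (Fin 2) (Fin 2) ℂ := !![1, 0; 0, -1]

/-!
Multiplying the eigenvalue equation by `i σ₂` turns it into `φ' = A φ`, where `A` is a constant
matrix with `A² = -(λ² - μ²) = -k²`. Hence `k φ(t) = k cos(k(t - a)) φ(a) + sin(k(t - a)) A φ(a)`
on an interval `[a, b]`. The left boundary condition makes `φ(a)` a multiple of `(1, 1)`, nonzero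
since `φ ≠ 0`; the right one says that the components of `φ(b)` add up to zero, and this sum is a
nonzero multiple of `μ sin(k(b - a)) + k cos(k(b - a))`. Squaring this relation gives the rest.
-/

section Rotation

variable {E : Type*} [NormedAddCommGroup E] [NormedSpace ℂ E] {A : E →L[ℂ] E} {k : ℂ}
  {a b : ℝ} {φ : ℝ → E}

theorem cos_smul_sub_sin_smul_eq_of_hasDerivWithinAt (hA : ∀ x, A (A x) = -(k ^ 2 • x))
    (hφ : ContinuousOn φ (Set.Icc a b))
    (hφ' : ∀ t ∈ Set.Ico a b, HasDerivWithinAt φ (A (φ t)) (Set.Ici t) t)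
    {t : ℝ} (ht : t ∈ Set.Icc a b) :
    (k * cos (k * (t - a))) • φ t - sin (k * (t - a)) • A (φ t) = k • φ a := by
  have phase (t : ℝ) : HasDerivAt (fun z : ℂ ↦ k * (z - a)) k t := by
    simpa using ((hasDerivAt_id (t : ℂ)).sub_const (a : ℂ)).const_mul k
  have cos_deriv (t : ℝ) := (phase t).ccos.comp_ofReal.const_mul k
  have sin_deriv (t : ℝ) := (phase t).csin.comp_ofReal
  have deriv_zero (t : ℝ) (ht : t ∈ Set.Ico a b) : HasDerivWithinAt
      (fun t : ℝ ↦ (k * cos (k * (t - a))) • φ t - sin (k * (t - a)) • A (φ t))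
      0 (Set.Ici t) t := by
    have hAφ : HasDerivWithinAt (fun t ↦ A (φ t)) (A (A (φ t))) (Set.Ici t) t :=
      (A.restrictScalars ℝ).hasFDerivAt.comp_hasDerivWithinAt t (hφ' t ht)
    refine (((cos_deriv t).hasDerivWithinAt.smul (hφ' t ht)).sub
      ((sin_deriv t).hasDerivWithinAt.smul hAφ)).congr_deriv ?_
    rw [hA]
    module
  have cont : ContinuousOn
      (fun t : ℝ ↦ (k * cos (k * (t - a))) • φ t - sin (k * (t - a)) • A (φ t))
      (Set.Icc a b) := by fun_prop
  simpa using constant_of_has_deriv_right_zero cont deriv_zero t ht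

theorem smul_eq_cos_smul_add_sin_smul_of_hasDerivWithinAt (hA : ∀ x, A (A x) = -(k ^ 2 • x))
    (hk : k ≠ 0) (hφ : ContinuousOn φ (Set.Icc a b))
    (hφ' : ∀ t ∈ Set.Ico a b, HasDerivWithinAt φ (A (φ t)) (Set.Ici t) t)
    {t : ℝ} (ht : t ∈ Set.Icc a b) :
    k • φ t = (k * cos (k * (t - a))) • φ a + sin (k * (t - a)) • A (φ a) := by
  have rotated := cos_smul_sub_sin_smul_eq_of_hasDerivWithinAt hA hφ hφ' ht
  have rotated_A := congrArg A rotated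
  simp only [map_sub, map_smul, hA] at rotated_A
  have pythagoras := sin_sq_add_cos_sq (k * (t - a))
  refine smul_right_injective E hk ?_
  calc k • k • φ t
      = (k ^ 2 * (sin (k * (t - a)) ^ 2 + cos (k * (t - a)) ^ 2)) • φ t := by
        rw [pythagoras]; module
    _ = cos (k * (t - a)) • k • ((k * cos (k * (t - a))) • φ t - sin (k * (t - a)) • A (φ t))
        + sin (k * (t - a)) • ((k * cos (k * (t - a))) • A (φ t)
          - sin (k * (t - a)) • -(k ^ 2 • φ t)) := by module
    _ = k • ((k * cos (k * (t - a))) • φ a + sin (k * (t - a)) • A (φ a)) := by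
        rw [rotated, rotated_A]; module

end Rotation

/-- The matrix `i σ₂ (lam - μ σ₃)`, written out: the transverse eigenvalue equation with mass `μ`
and eigenvalue `lam` is the first-order system `φ' = transverseGenerator μ lam *ᵥ φ`. -/
def transverseGenerator (μ lam : ℂ) : Matrix (Fin 2) (Fin 2) ℂ :=
  !![0, lam + μ; μ - lam, 0]

theorem transverseGenerator_mulVec (μ lam : ℂ) (v : Fin 2 → ℂ) :
    transverseGenerator μ lam *ᵥ v = ![(lam + μ) * v 1, (μ - lam) * v 0] := by
  simp [transverseGenerator, vecHead, vecTail]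

theorem transverseGenerator_mulVec_mulVec (μ lam : ℂ) (v : Fin 2 → ℂ) :
    transverseGenerator μ lam *ᵥ transverseGenerator μ lam *ᵥ v
      = -((lam ^ 2 - μ ^ 2) • v) := by
  simp only [transverseGenerator_mulVec]
  ext i
  fin_cases i <;> simp <;> ring

theorem transverse_eigen_eq_iff {μ lam : ℂ} {v w : Fin 2 → ℂ} :
    (-I) • σ2 *ᵥ w + μ • σ3 *ᵥ v = lam • v ↔ w = transverseGenerator μ lam *ᵥ v := by
  have hσ2 : (-I) • σ2 *ᵥ w = ![-w 1, w 0] := by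
    simp [σ2, vecHead, vecTail, ← mul_assoc]
  have hσ3 : μ • σ3 *ᵥ v = ![μ * v 0, -(μ * v 1)] := by
    simp [σ3, vecHead, vecTail]
  rw [hσ2, hσ3, transverseGenerator_mulVec]
  simp only [funext_iff, Fin.forall_fin_two, Pi.add_apply, Pi.smul_apply, smul_eq_mul,
    cons_val_zero, cons_val_one]
  constructor
  · rintro ⟨h0, h1⟩
    exact ⟨by linear_combination h1, by linear_combination -h0⟩
  · rintro ⟨h0, h1⟩
    exact ⟨by linear_combination -h1, by linear_combination h0⟩

theorem σ1_mulVec_eq_self_iff {v : Fin 2 → ℂ} : σ1 *ᵥ v = v ↔ v 1 = v 0 := by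
  simp [σ1, vecHead, vecTail, funext_iff, Fin.forall_fin_two, eq_comm (a := v 0)]

theorem σ1_mulVec_eq_neg_iff {v : Fin 2 → ℂ} : σ1 *ᵥ v = -v ↔ v 0 + v 1 = 0 := by
  simp [σ1, vecHead, vecTail, funext_iff, Fin.forall_fin_two, eq_neg_iff_add_eq_zero,
    add_comm (v 1)]

theorem smul_eq_of_transverse_eigen {μ lam k : ℂ} (hk : k ^ 2 = lam ^ 2 - μ ^ 2)
    (hk0 : k ≠ 0) {a b : ℝ} {φ φ' : ℝ → Fin 2 → ℂ} (hφ : ContinuousOn φ (Set.Icc a b))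
    (hφ' : ∀ t ∈ Set.Ico a b, HasDerivWithinAt φ (φ' t) (Set.Ici t) t)
    (heig : ∀ t ∈ Set.Ico a b, (-I) • σ2 *ᵥ φ' t + μ • σ3 *ᵥ φ t = lam • φ t)
    {t : ℝ} (ht : t ∈ Set.Icc a b) :
    k • φ t = (k * cos (k * (t - a))) • φ a
      + sin (k * (t - a)) • transverseGenerator μ lam *ᵥ φ a := by
  let A := (transverseGenerator μ lam).mulVecLin.toContinuousLinearMap
  have hA (v : Fin 2 → ℂ) : A (A v) = -(k ^ 2 • v) :=
    hk ▸ transverseGenerator_mulVec_mulVec μ lam v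
  have hode (t : ℝ) (ht : t ∈ Set.Ico a b) : HasDerivWithinAt φ (A (φ t)) (Set.Ici t) t :=
    (hφ' t ht).congr_deriv (transverse_eigen_eq_iff.1 (heig t ht))
  exact smul_eq_cos_smul_add_sin_smul_of_hasDerivWithinAt hA hk0 hφ hode ht

theorem sq_mul_sin_sq_eq_of_dispersion {μ lam k θ : ℂ} (hk : k ^ 2 = lam ^ 2 - μ ^ 2)
    (hdisp : μ * sin θ + k * cos θ = 0) : lam ^ 2 * sin θ ^ 2 = k ^ 2 := by
  linear_combination -sin θ ^ 2 * hk + k ^ 2 * sin_sq_add_cos_sq θ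
    + (μ * sin θ - k * cos θ) * hdisp

theorem transverse_eigen_oscillatory_general {μ lam k : ℂ} (hk : k ^ 2 = lam ^ 2 - μ ^ 2)
    (hk0 : k ≠ 0) {a b : ℝ} {φ φ' : ℝ → Fin 2 → ℂ} (hφ : ContinuousOn φ (Set.Icc a b))
    (hφ' : ∀ t ∈ Set.Ico a b, HasDerivWithinAt φ (φ' t) (Set.Ici t) t)
    (hne : ∃ t ∈ Set.Icc a b, φ t ≠ 0)
    (heig : ∀ t ∈ Set.Ico a b, (-I) • σ2 *ᵥ φ' t + μ • σ3 *ᵥ φ t = lam • φ t)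
    (hbca : σ1 *ᵥ φ a = φ a) (hbcb : σ1 *ᵥ φ b = -φ b) :
    sin (k * (b - a)) ≠ 0 ∧ μ * sin (k * (b - a)) + k * cos (k * (b - a)) = 0 ∧
      lam ^ 2 * sin (k * (b - a)) ^ 2 = k ^ 2 := by
  obtain ⟨t₀, ht₀, hφt₀⟩ := hne
  have solution {t : ℝ} (ht : t ∈ Set.Icc a b) :=
    smul_eq_of_transverse_eigen hk hk0 hφ hφ' heig ht
  have hleft : φ a 1 = φ a 0 := σ1_mulVec_eq_self_iff.1 hbca
  have hφa : φ a 0 ≠ 0 := by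
    intro h0
    have hφa : φ a = 0 := by
      ext i
      fin_cases i <;> simp [hleft, h0]
    exact hφt₀ (by simpa [hφa, hk0] using solution ht₀)
  have hdisp : μ * sin (k * (b - a)) + k * cos (k * (b - a)) = 0 := by
    have hright : φ b 0 + φ b 1 = 0 := σ1_mulVec_eq_neg_iff.1 hbcb
    have hb := solution (Set.right_mem_Icc.2 (ht₀.1.trans ht₀.2))
    have hgen : transverseGenerator μ lam *ᵥ φ a = ![(lam + μ) * φ a 0, (μ - lam) * φ a 0] :=
      hleft ▸ transverseGenerator_mulVec μ lam (φ a)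
    have hb0 : k * φ b 0 = k * cos (k * (b - a)) * φ a 0
        + sin (k * (b - a)) * ((lam + μ) * φ a 0) := by
      simpa [hgen] using congrFun hb 0
    have hb1 : k * φ b 1 = k * cos (k * (b - a)) * φ a 0
        + sin (k * (b - a)) * ((μ - lam) * φ a 0) := by
      simpa [hgen, hleft] using congrFun hb 1
    refine (mul_eq_zero.1 ?_).resolve_left hφa
    linear_combination (k * hright - hb0 - hb1) / 2
  have hsq := sq_mul_sin_sq_eq_of_dispersion hk hdisp
  have hsin : sin (k * (b - a)) ≠ 0 := by
    intro h
    exact pow_ne_zero 2 hk0 (by simpa [h] using hsq.symm)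
  exact ⟨hsin, hdisp, hsq⟩

/-- Oscillatory case `k² = λ² − μ² > 0` of the transverse eigenvalue problem: a
nontrivial eigenfunction with the infinite mass boundary conditions forces the
dispersion relations `μ·sin(2k) + k·cos(2k) = 0` and `λ²·sin²(2k) = k²`. -/
theorem transverse_eigen_oscillatory (μ lam : ℝ) (hk : μ ^ 2 < lam ^ 2)
    (k : ℝ) (hkdef : k = Real.sqrt (lam ^ 2 - μ ^ 2))
    (φ : ℝ → Fin 2 → ℂ) (hφ : Differentiable ℝ φ)
    (hne : ∃ t ∈ Set.Icc (-1 : ℝ) 1, φ t ≠ 0)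
    (heig : ∀ t ∈ Set.Icc (-1 : ℝ) 1,
      (-Complex.I) • σ2.mulVec (deriv φ t) + (μ : ℂ) • σ3.mulVec (φ t)
        = (lam : ℂ) • φ t)
    (hbc1 : σ1.mulVec (φ (-1)) = φ (-1))
    (hbc2 : σ1.mulVec (φ 1) = -φ 1) :
    Real.sin (2 * k) ≠ 0 ∧
    μ * Real.sin (2 * k) + k * Real.cos (2 * k) = 0 ∧
    lam ^ 2 * Real.sin (2 * k) ^ 2 = k ^ 2 := by
  have hk_sq : k ^ 2 = lam ^ 2 - μ ^ 2 := by rw [hkdef, Real.sq_sqrt (sub_pos.2 hk).le]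
  have hk0 : k ≠ 0 := hkdef ▸ (Real.sqrt_pos.2 (sub_pos.2 hk)).ne'
  have hlen : (k : ℂ) * ((1 : ℝ) - (-1 : ℝ)) = ((2 * k : ℝ) : ℂ) := by push_cast; ring
  have h := transverse_eigen_oscillatory_general (by exact_mod_cast hk_sq) (ofReal_ne_zero.2 hk0)
    hφ.continuous.continuousOn (fun t _ ↦ (hφ t).hasDerivAt.hasDerivWithinAt) hne
    (fun t ht ↦ heig t (Set.Ico_subset_Icc_self ht)) hbc1 hbc2
  rw [hlen] at h
  exact_mod_cast h
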